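/- Let k and n be positive integers, set P = [0,1]ᵏ, and let f : P × [0,1] → ℂⁿ and α : P → ℂⁿ be continuous maps. Assume there are two nondegenerate closed intervals J and J′ with J ∩ J′ = ∅ and J ∪ J′ ⊂ (0,1) such that for every p ∈ P the path f_p := f(p, ·) : [0,1] → ℂⁿ is ℂ-full on J (the ℂ-linear span of f_p(J) equals ℂⁿ) and ℝ-full on J′ (the ℝ-linear span of f_p(J′) equals ℂⁿ as a real vector space). Then for every σ > 0 there exists a continuous function h : P × [0,1] → ℂ \ {0} such that h(p, 0) = h(p, 1) = 1 for all p ∈ P, |Re(h(p,s)) − 1| < σ for all (p,s) ∈ P × [0,1] (in particular Re(h) > 0 everywhere), and ∫₀¹ h(p,s)·f(p,s) ds = α(p) exactly for all p ∈ P. -/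

import Mathlib

open MeasureTheory Set

/-!
Look for the multiplier in the form `h = 1 + i u` with `u` real: then `Re h = 1`, so `h` never
vanishes, and the moment condition becomes `∫ u f = β` with `β = -i (α - ∫ f)`. For
`u(p, s) = ρ(s) ℓ(f(p, s))`, with `ℓ` a real functional and `ρ` a weight that is positive inside
the interval and zero at its endpoints (so that `h = 1` there), the left side is linear in `ℓ`, and
pairing it with `ℓ` gives `∫ ρ ℓ(f)²`, which is positive for `ℓ ≠ 0` because `f(p, ·)`
is ℝ-full. So for each `p` there is exactly one such `ℓ`, and it depends continuously on `p` because
inversion of operators is continuous.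
-/

lemma continuousOn_parametric_intervalIntegral {X E : Type*} [TopologicalSpace X]
    [NormedAddCommGroup E] [NormedSpace ℝ E] {K : Set X} {a b : ℝ} {f : X → ℝ → E}
    (hf : ContinuousOn f.uncurry (K ×ˢ uIcc a b)) :
    ContinuousOn (fun p => ∫ s in a..b, f p s) K := by
  have hint : ∀ p ∈ K, IntervalIntegrable (f p) volume a b := fun p hp =>
    (hf.uncurry_left p hp).intervalIntegrable
  intro q hq
  rw [ContinuousWithinAt, Metric.tendsto_nhds]
  intro ε hε
  obtain ⟨δ, hδ, hδε⟩ := exists_pos_mul_lt hε |b - a|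
  obtain ⟨V, hV, hVδ⟩ := isCompact_uIcc.mem_uniformity_of_prod hf hq (Metric.dist_mem_uniformity hδ)
  filter_upwards [hV, self_mem_nhdsWithin] with p hpV hpK
  calc dist (∫ s in a..b, f p s) (∫ s in a..b, f q s)
      = ‖∫ s in a..b, (f p s - f q s)‖ := by
        rw [dist_eq_norm, intervalIntegral.integral_sub (hint p hpK) (hint q hq)]
    _ ≤ δ * |b - a| := intervalIntegral.norm_integral_le_of_norm_le_const fun s hs => by
        rw [← dist_eq_norm]
        exact (hVδ p hpV s (uIoc_subset_uIcc hs)).le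
    _ < ε := by rwa [mul_comm]

lemma eqOn_zero_of_intervalIntegral_eq_zero {φ : ℝ → ℝ} {a b : ℝ} (hab : a < b)
    (hφ : ContinuousOn φ (Icc a b)) (hφ_nonneg : ∀ s ∈ Icc a b, 0 ≤ φ s)
    (hzero : ∫ s in a..b, φ s = 0) : EqOn φ 0 (Icc a b) := by
  intro s hs
  by_contra hne
  have hpos : 0 < ∫ t in a..b, φ t :=
    intervalIntegral.integral_pos hab hφ (fun t ht => hφ_nonneg t (Ioc_subset_Icc_self ht))
      ⟨s, hs, (hφ_nonneg s hs).lt_of_ne' hne⟩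
  exact hpos.ne' hzero

lemma isInvertible_of_injective_of_finrank_eq {𝕜 E F : Type*} [NontriviallyNormedField 𝕜]
    [CompleteSpace 𝕜] [NormedAddCommGroup E] [NormedSpace 𝕜 E] [FiniteDimensional 𝕜 E]
    [NormedAddCommGroup F] [NormedSpace 𝕜 F] [FiniteDimensional 𝕜 F] {T : E →L[𝕜] F}
    (hT : Function.Injective T) (hdim : Module.finrank 𝕜 E = Module.finrank 𝕜 F) :
    T.IsInvertible :=
  ⟨(T.toLinearMap.linearEquivOfInjective hT hdim).toContinuousLinearEquiv, rfl⟩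

lemma continuousOn_inverse_of_isInvertible {𝕜 X E F : Type*} [NontriviallyNormedField 𝕜]
    [TopologicalSpace X] [NormedAddCommGroup E] [NormedSpace 𝕜 E] [CompleteSpace E]
    [NormedAddCommGroup F] [NormedSpace 𝕜 F] {K : Set X} {T : X → E →L[𝕜] F}
    (hT : ContinuousOn T K) (hinv : ∀ p ∈ K, (T p).IsInvertible) :
    ContinuousOn (fun p => (T p).inverse) K := by
  intro p hp
  obtain ⟨e, he⟩ := hinv p hp
  have hcont : ContinuousAt ContinuousLinearMap.inverse (T p) :=
    he ▸ (contDiffAt_map_inverse e (n := 0)).continuousAt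
  exact hcont.comp_continuousWithinAt (hT p hp)

section FrameOperator

variable {E : Type*} [NormedAddCommGroup E] [NormedSpace ℝ E] {ρ : ℝ → ℝ} {g : ℝ → E} {a b : ℝ}

/-- The frame operator `ℓ ↦ ∫ ρ(s) ℓ(g(s)) g(s) ds` of the path `g` on `[a, b]` with weight `ρ`.
It is defined on the dual space rather than on `E`, so that no inner product is needed. -/
noncomputable def frameOperator (ρ : ℝ → ℝ) (g : ℝ → E) (a b : ℝ) : StrongDual ℝ E →L[ℝ] E :=
  ∫ s in a..b, ρ s • (NormedSpace.inclusionInDoubleDual ℝ E (g s)).smulRight (g s)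

variable [FiniteDimensional ℝ E]

lemma frameOperator_apply (hρ : ContinuousOn ρ (uIcc a b)) (hg : ContinuousOn g (uIcc a b))
    (ℓ : StrongDual ℝ E) :
    frameOperator ρ g a b ℓ = ∫ s in a..b, (ρ s * ℓ (g s)) • g s := by
  have hcont : ContinuousOn
      (fun s => ρ s • (NormedSpace.inclusionInDoubleDual ℝ E (g s)).smulRight (g s))
      (uIcc a b) := by
    refine continuousOn_clm_apply.2 fun ℓ => ?_
    simp only [smul_apply, ContinuousLinearMap.smulRight_apply,
      NormedSpace.dual_def]
    fun_prop
  rw [frameOperator, ContinuousLinearMap.intervalIntegral_apply hcont.intervalIntegrable]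
  simp only [smul_apply, ContinuousLinearMap.smulRight_apply,
    NormedSpace.dual_def, smul_smul]

lemma apply_frameOperator_apply_self (hρ : ContinuousOn ρ (uIcc a b))
    (hg : ContinuousOn g (uIcc a b)) (ℓ : StrongDual ℝ E) :
    ℓ (frameOperator ρ g a b ℓ) = ∫ s in a..b, ρ s * ℓ (g s) ^ 2 := by
  have := FiniteDimensional.complete ℝ E
  have hint : IntervalIntegrable (fun s => (ρ s * ℓ (g s)) • g s) volume a b :=
    ContinuousOn.intervalIntegrable (by fun_prop)
  rw [frameOperator_apply hρ hg, ← ContinuousLinearMap.intervalIntegral_comp_comm ℓ hint]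
  simp only [map_smul, smul_eq_mul, mul_assoc, sq]

lemma injective_frameOperator (hab : a < b) (hρ : ContinuousOn ρ (Icc a b))
    (hρ_nonneg : ∀ s ∈ Icc a b, 0 ≤ ρ s) (hρ_ne : ∀ s ∈ Ioo a b, ρ s ≠ 0)
    (hg : ContinuousOn g (Icc a b)) (hspan : Submodule.span ℝ (g '' Icc a b) = ⊤) :
    Function.Injective (frameOperator ρ g a b) := by
  refine (injective_iff_map_eq_zero _).2 fun ℓ hℓ => ?_
  have hquad : ∫ s in a..b, ρ s * ℓ (g s) ^ 2 = 0 := by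
    rw [← uIcc_of_le hab.le] at hρ hg
    rw [← apply_frameOperator_apply_self hρ hg, hℓ, map_zero]
  have hquad_zero : EqOn (fun s => ρ s * ℓ (g s) ^ 2) 0 (Icc a b) :=
    eqOn_zero_of_intervalIntegral_eq_zero hab (by fun_prop)
      (fun s hs => mul_nonneg (hρ_nonneg s hs) (sq_nonneg _)) hquad
  have hIoo : EqOn (fun s => ℓ (g s)) 0 (Ioo a b) := fun s hs => by
    simpa [hρ_ne s hs] using hquad_zero (Ioo_subset_Icc_self hs)
  have hIcc : EqOn (fun s => ℓ (g s)) 0 (Icc a b) :=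
    hIoo.of_subset_closure (by fun_prop) continuousOn_const Ioo_subset_Icc_self
      (closure_Ioo hab.ne).ge
  exact ContinuousLinearMap.coe_injective (LinearMap.ext_on hspan (forall_mem_image.2 hIcc))

lemma isInvertible_frameOperator (hab : a < b) (hρ : ContinuousOn ρ (Icc a b))
    (hρ_nonneg : ∀ s ∈ Icc a b, 0 ≤ ρ s) (hρ_ne : ∀ s ∈ Ioo a b, ρ s ≠ 0)
    (hg : ContinuousOn g (Icc a b)) (hspan : Submodule.span ℝ (g '' Icc a b) = ⊤) :
    (frameOperator ρ g a b).IsInvertible :=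
  isInvertible_of_injective_of_finrank_eq
    (injective_frameOperator hab hρ hρ_nonneg hρ_ne hg hspan)
    (LinearMap.toContinuousLinearMap.finrank_eq.symm.trans Subspace.dual_finrank_eq)

lemma continuousOn_frameOperator {X : Type*} [TopologicalSpace X] {K : Set X} {f : X → ℝ → E}
    (hρ : ContinuousOn ρ (uIcc a b)) (hf : ContinuousOn f.uncurry (K ×ˢ uIcc a b)) :
    ContinuousOn (fun p => frameOperator ρ (f p) a b) K := by
  refine continuousOn_clm_apply.2 fun ℓ => ?_
  have hρ_snd : ContinuousOn (fun q : X × ℝ => ρ q.2) (K ×ˢ uIcc a b) :=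
    hρ.comp continuousOn_snd fun q hq => hq.2
  have hcont : ContinuousOn (fun p => ∫ s in a..b, (ρ s * ℓ (f p s)) • f p s) K :=
    continuousOn_parametric_intervalIntegral
      ((hρ_snd.mul (ℓ.continuous.comp_continuousOn hf)).smul hf)
  exact hcont.congr fun p hp => frameOperator_apply hρ (hf.uncurry_left p hp) ℓ

end FrameOperator

section Multiplier

variable {X E : Type*} [TopologicalSpace X] [NormedAddCommGroup E] {K : Set X} {f : X → ℝ → E}
  {a b : ℝ}

lemma exists_real_multiplier_integral_eq [NormedSpace ℝ E] [FiniteDimensional ℝ E] {β : X → E}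
    (hab : a < b) (hf : ContinuousOn f.uncurry (K ×ˢ Icc a b)) (hβ : ContinuousOn β K)
    (hspan : ∀ p ∈ K, Submodule.span ℝ (f p '' Icc a b) = ⊤) :
    ∃ u : X → ℝ → ℝ, ContinuousOn u.uncurry (K ×ˢ Icc a b) ∧ (∀ p, u p a = 0 ∧ u p b = 0) ∧
      ∀ p ∈ K, ∫ s in a..b, u p s • f p s = β p := by
  let ρ : ℝ → ℝ := fun s => (s - a) * (b - s)
  let ℓ : X → StrongDual ℝ E := fun p => (frameOperator ρ (f p) a b).inverse (β p)
  have hρ : Continuous ρ := by fun_prop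
  have hinv : ∀ p ∈ K, (frameOperator ρ (f p) a b).IsInvertible := fun p hp =>
    isInvertible_frameOperator hab hρ.continuousOn
      (fun s hs => mul_nonneg (sub_nonneg.2 hs.1) (sub_nonneg.2 hs.2))
      (fun s hs => mul_ne_zero (sub_pos.2 hs.1).ne' (sub_pos.2 hs.2).ne')
      (hf.uncurry_left p hp) (hspan p hp)
  have hf' : ContinuousOn f.uncurry (K ×ˢ uIcc a b) := by rwa [uIcc_of_le hab.le]
  have hℓ : ContinuousOn ℓ K :=
    (continuousOn_inverse_of_isInvertible (continuousOn_frameOperator hρ.continuousOn hf')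
      hinv).clm_apply hβ
  refine ⟨fun p s => ρ s * ℓ p (f p s), ?_, fun p => by simp [ρ], fun p hp => ?_⟩
  · exact (hρ.comp continuous_snd).continuousOn.mul
      ((hℓ.comp continuousOn_fst fun q hq => hq.1).clm_apply hf)
  · rw [← frameOperator_apply hρ.continuousOn (hf'.uncurry_left p hp)]
    exact (hinv p hp).self_apply_inverse (β p)

variable [NormedSpace ℂ E]

lemma integral_one_add_I_mul_smul {u : ℝ → ℝ} {g : ℝ → E} (hu : ContinuousOn u (uIcc a b))
    (hg : ContinuousOn g (uIcc a b)) :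
    ∫ s in a..b, (1 + Complex.I * u s) • g s =
      (∫ s in a..b, g s) + Complex.I • ∫ s in a..b, u s • g s := by
  have hug : IntervalIntegrable (fun s => Complex.I • u s • g s) volume a b :=
    ((hu.smul hg).const_smul Complex.I).intervalIntegrable
  rw [← intervalIntegral.integral_smul, ← intervalIntegral.integral_add hg.intervalIntegrable hug]
  simp only [add_smul, one_smul, mul_smul, Complex.coe_smul]

theorem statement6_general [FiniteDimensional ℂ E] {α : X → E} (hab : a < b)
    (hf : ContinuousOn (fun q : X × ℝ => f q.1 q.2) (K ×ˢ Icc a b)) (hα : ContinuousOn α K)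
    (hspan : ∀ p ∈ K, Submodule.span ℝ (f p '' Icc a b) = ⊤) :
    ∃ h : X → ℝ → ℂ, ContinuousOn (fun q : X × ℝ => h q.1 q.2) (K ×ˢ Icc a b) ∧
      (∀ p, h p a = 1 ∧ h p b = 1) ∧ (∀ p s, (h p s).re = 1) ∧
      ∀ p ∈ K, ∫ s in a..b, h p s • f p s = α p := by
  have hIcc : uIcc a b = Icc a b := uIcc_of_le hab.le
  have hint : ContinuousOn (fun p => ∫ s in a..b, f p s) K :=
    continuousOn_parametric_intervalIntegral (by rwa [hIcc])
  obtain ⟨u, hu, hu_endpoints, hu_integral⟩ := exists_real_multiplier_integral_eq hab hf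
    ((hα.sub hint).const_smul (-Complex.I)) hspan
  refine ⟨fun p s => 1 + Complex.I * u p s, ?_, fun p => by simp [hu_endpoints p],
    fun p s => by simp, fun p hp => ?_⟩
  · exact continuousOn_const.add
      (continuousOn_const.mul (Complex.continuous_ofReal.comp_continuousOn hu))
  · rw [integral_one_add_I_mul_smul (hIcc ▸ hu.uncurry_left p hp) (hIcc ▸ hf.uncurry_left p hp),
      hu_integral p hp]
    simp [smul_smul]

end Multiplier

/-- Corollary 3.5, with the quantitative bound on the real part.
Let `P = [0,1]ᵏ`, and let `f : P × [0,1] → ℂⁿ` and `α : P → ℂⁿ` be continuous. Assume that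
there are disjoint nondegenerate closed intervals `J = [a,b]` and `J' = [c,d]` contained in
`(0,1)` such that each path `f_p` is ℂ-full on `J` and ℝ-full on `J'`. Then for every
`σ > 0` there is a continuous nowhere-vanishing `h : P × [0,1] → ℂ*` with
`h(p,0) = h(p,1) = 1`, `|Re h - 1| < σ` everywhere, and `∫₀¹ h(p,s) • f(p,s) ds = α(p)`
for all `p ∈ P`. -/
theorem statement6 (k n : ℕ) (hk : 0 < k) (hn : 0 < n)
    (f : (Fin k → ℝ) → ℝ → EuclideanSpace ℂ (Fin n))
    (α : (Fin k → ℝ) → EuclideanSpace ℂ (Fin n))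
    (hf : ContinuousOn (fun q : (Fin k → ℝ) × ℝ => f q.1 q.2)
      (Icc (0 : Fin k → ℝ) 1 ×ˢ Icc (0:ℝ) 1))
    (hα : ContinuousOn α (Icc (0 : Fin k → ℝ) 1))
    (a b c d : ℝ) (hab : a < b) (hcd : c < d)
    (hJJ' : Disjoint (Icc a b) (Icc c d))
    (hJ : Icc a b ⊆ Ioo (0:ℝ) 1) (hJ' : Icc c d ⊆ Ioo (0:ℝ) 1)
    (hCfull : ∀ p ∈ Icc (0 : Fin k → ℝ) 1, Submodule.span ℂ (f p '' Icc a b) = ⊤)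
    (hRfull : ∀ p ∈ Icc (0 : Fin k → ℝ) 1, Submodule.span ℝ (f p '' Icc c d) = ⊤)
    (σ : ℝ) (hσ : 0 < σ) :
    ∃ h : (Fin k → ℝ) → ℝ → ℂ,
      ContinuousOn (fun q : (Fin k → ℝ) × ℝ => h q.1 q.2)
        (Icc (0 : Fin k → ℝ) 1 ×ˢ Icc (0:ℝ) 1) ∧
      (∀ p ∈ Icc (0 : Fin k → ℝ) 1, ∀ s ∈ Icc (0:ℝ) 1, h p s ≠ 0) ∧
      (∀ p ∈ Icc (0 : Fin k → ℝ) 1, h p 0 = 1 ∧ h p 1 = 1) ∧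
      (∀ p ∈ Icc (0 : Fin k → ℝ) 1, ∀ s ∈ Icc (0:ℝ) 1, |(h p s).re - 1| < σ) ∧
      (∀ p ∈ Icc (0 : Fin k → ℝ) 1, (∫ s in (0:ℝ)..1, h p s • f p s) = α p) := by
  obtain ⟨h, hcont, hends, hre, hint⟩ := statement6_general zero_lt_one hf hα fun p hp =>
    top_unique <| (hRfull p hp).ge.trans <|
      Submodule.span_mono <| image_mono <| hJ'.trans Ioo_subset_Icc_self
  exact ⟨h, hcont, fun p _ s _ h0 => by simpa [h0] using hre p s, fun p _ => hends p,
    fun p _ s _ => by simpa [hre p s] using hσ, hint⟩
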